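/- Suppose c < 0 and 0 < γ < h. Then lim_{α↓0} (−c)·μ·α^γ·E(α) = 1; equivalently, E(α)/[ρ(α)/(μ(1 − ρ(α)))] → 1 as α ↓ 0, i.e. the mean steady-state virtual waiting time is asymptotically equal to the mean workload of the M/M/1 queue with arrival rate λ(α) and service rate μ. -/

import Mathlib

open Filter Set Topology MeasureTheory

/-- `J(α) = ∫_0^∞ exp{λ(α) ∫_0^x F̄(α u) du - μ x} dx` for the `M/M/1+GI` queue
with `ρ(α) = 1 + c α^γ`, `λ(α) = ρ(α) μ`, patience CDF `x ↦ F(α x)`. -/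
noncomputable def Jq (F : ℝ → ℝ) (μ c γ α : ℝ) : ℝ :=
  ∫ x in Set.Ioi (0 : ℝ),
    Real.exp ((1 + c * α ^ γ) * μ * (∫ u in (0 : ℝ)..x, (1 - F (α * u))) - μ * x)

/-- `J₁(α) = ∫_0^∞ x exp{λ(α) ∫_0^x F̄(α u) du - μ x} dx`. -/
noncomputable def J1q (F : ℝ → ℝ) (μ c γ α : ℝ) : ℝ :=
  ∫ x in Set.Ioi (0 : ℝ),
    x * Real.exp ((1 + c * α ^ γ) * μ * (∫ u in (0 : ℝ)..x, (1 - F (α * u))) - μ * x)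

/-- Exact mean steady-state virtual waiting time `E(α) = λ(α) J₁(α) / (1 + λ(α) J(α))`
in the `M/M/1+GI` model. -/
noncomputable def Emean (F : ℝ → ℝ) (μ c γ α : ℝ) : ℝ :=
  (1 + c * α ^ γ) * μ * J1q F μ c γ α / (1 + (1 + c * α ^ γ) * μ * Jq F μ c γ α)

/-!
On the time scale `1 / ε`, where `ε = 1 - ρ(α) = -c α ^ γ`, the exponent
`λ ∫₀ˣ F̄(αu) du - μ x` equals `-μ t - λ ∫₀ˣ F(αu) du` with `t = ε x`. If `F(x) = O(x ^ κ)` at `0`,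
the last term is, for fixed `t`, `O(α ^ κ / ε ^ (κ + 1))`, which vanishes in the limit because
`γ < κ / (κ + 1)`: abandonment is negligible before the `M/M/1` queue relaxes. As the exponent never
exceeds `-μ t`, dominated convergence gives `ε J → 1 / μ` and `ε² J₁ → 1 / μ²`, and hence
`μ ε E → 1`.
-/

open Asymptotics

section OrderOfVanishing

variable {E : Type*} [NormedAddCommGroup E] [NormedSpace ℝ E]

lemma isBigO_pow_of_iteratedDerivWithin_eq_zero {f : ℝ → E} {s : Set ℝ} {x₀ : ℝ} {n : ℕ}
    (hs : Convex ℝ s) (hx₀ : x₀ ∈ s) (hf : ContDiffOn ℝ n f s)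
    (hderiv : ∀ j < n, iteratedDerivWithin j f s x₀ = 0) :
    f =O[𝓝[s] x₀] fun x => (x - x₀) ^ n := by
  have htaylor : ∀ x, taylorWithinEval f n s x₀ x =
      ((n.factorial : ℝ)⁻¹ * (x - x₀) ^ n) • iteratedDerivWithin n f s x₀ := fun x => by
    rw [taylor_within_apply, Finset.sum_range_succ, add_eq_right]
    exact Finset.sum_eq_zero fun j hj => by rw [hderiv j (Finset.mem_range.mp hj), smul_zero]
  have hlead : taylorWithinEval f n s x₀ =O[𝓝[s] x₀] fun x => (x - x₀) ^ n := by
    refine .of_bound (‖(n.factorial : ℝ)⁻¹‖ * ‖iteratedDerivWithin n f s x₀‖)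
      (.of_forall fun x => ?_)
    rw [htaylor, norm_smul, norm_mul]
    exact (mul_right_comm _ _ _).le
  exact ((taylor_isLittleO hs hx₀ hf).isBigO.add hlead).congr_left fun x => sub_add_cancel _ _

lemma isBigO_integral_of_isBigO_rpow {f : ℝ → E} {κ : ℝ} (hκ : -1 < κ)
    (hf : f =O[𝓝[>] 0] fun x => x ^ κ) :
    (fun x => ∫ u in (0 : ℝ)..x, f u) =O[𝓝[>] 0] fun x => x ^ (κ + 1) := by
  obtain ⟨C, hC⟩ := hf.bound
  obtain ⟨δ, hδ, hbound⟩ := (mem_nhdsGT_iff_exists_Ioo_subset).mp hC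
  refine .of_bound (C / (κ + 1)) ?_
  filter_upwards [Ioo_mem_nhdsGT hδ] with x hx
  have hpow : ∀ u ∈ Ioc 0 x, ‖f u‖ ≤ C * u ^ κ := fun u hu => by
    simpa only [mem_ofPred_eq, Real.norm_of_nonneg (Real.rpow_nonneg hu.1.le κ)] using
      hbound ⟨hu.1, hu.2.trans_lt hx.2⟩
  calc ‖∫ u in (0 : ℝ)..x, f u‖ ≤ ∫ u in (0 : ℝ)..x, C * u ^ κ :=
        intervalIntegral.norm_integral_le_of_norm_le hx.1.le (.of_forall hpow)
          ((intervalIntegral.intervalIntegrable_rpow' hκ).const_mul C)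
    _ = C / (κ + 1) * x ^ (κ + 1) := by
        rw [intervalIntegral.integral_const_mul, integral_rpow (.inl hκ),
          Real.zero_rpow (by linarith), sub_zero]
        ring
    _ = C / (κ + 1) * ‖x ^ (κ + 1)‖ := by rw [Real.norm_of_nonneg (Real.rpow_nonneg hx.1.le _)]

lemma tendsto_rpow_nhdsGT_zero {s : ℝ} (hs : 0 < s) :
    Tendsto (fun x : ℝ => x ^ s) (𝓝[>] 0) (𝓝[>] 0) := by
  refine tendsto_nhdsWithin_iff.mpr ⟨?_, ?_⟩
  · simpa only [Real.zero_rpow hs.ne'] using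
      (Real.continuousAt_rpow_const 0 s (.inr hs.le)).tendsto.mono_left nhdsWithin_le_nhds
  · filter_upwards [self_mem_nhdsWithin] with x hx using Real.rpow_pos_of_pos hx s

lemma tendsto_integral_comp_mul_of_isBigO_rpow {f : ℝ → E} {κ γ b : ℝ} (hκ : -1 < κ)
    (hf : f =O[𝓝[>] 0] fun x => x ^ κ) (hγ : γ < κ / (κ + 1)) (hb : 0 < b) :
    Tendsto (fun α : ℝ => ∫ u in (0 : ℝ)..b / α ^ γ, f (α * u)) (𝓝[>] 0) (𝓝 0) := by
  have hγ1 : γ < 1 := hγ.trans ((div_lt_one (by linarith)).mpr (lt_add_one κ))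
  have hexp : 0 < κ - γ * (κ + 1) := by
    rw [lt_div_iff₀ (by linarith)] at hγ
    linarith
  have hend : Tendsto (fun α : ℝ => b * α ^ (1 - γ)) (𝓝[>] 0) (𝓝[>] 0) := by
    simpa only [mul_zero] using
      TendstoNhdsWithinIoi.const_mul hb (tendsto_rpow_nhdsGT_zero (sub_pos.mpr hγ1))
  have hbigO : (fun α : ℝ => α⁻¹ • ∫ u in (0 : ℝ)..b * α ^ (1 - γ), f u) =O[𝓝[>] 0]
      fun α => α⁻¹ * (b * α ^ (1 - γ)) ^ (κ + 1) :=
    (isBigO_refl (fun α : ℝ => α⁻¹) _).smul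
      ((isBigO_integral_of_isBigO_rpow hκ hf).comp_tendsto hend)
  have hrate : Tendsto (fun α : ℝ => α⁻¹ * (b * α ^ (1 - γ)) ^ (κ + 1)) (𝓝[>] 0) (𝓝 0) := by
    have h := ((tendsto_rpow_nhdsGT_zero hexp).mono_right nhdsWithin_le_nhds).const_mul
      (b ^ (κ + 1))
    rw [mul_zero] at h
    refine h.congr' ?_
    filter_upwards [self_mem_nhdsWithin] with α (hα : 0 < α)
    rw [Real.mul_rpow hb.le (Real.rpow_nonneg hα.le _), ← Real.rpow_mul hα.le,
      ← Real.rpow_neg_one, mul_left_comm, ← Real.rpow_add hα]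
    ring_nf
  refine (hbigO.trans_tendsto hrate).congr' ?_
  filter_upwards [self_mem_nhdsWithin] with α (hα : 0 < α)
  rw [intervalIntegral.integral_comp_mul_left f hα.ne', mul_zero, Real.rpow_sub hα, Real.rpow_one,
    mul_div_assoc', mul_div_assoc', mul_comm b]

end OrderOfVanishing

section LaplaceIntegrals

lemma rpow_smul_integral_rpow_smul_eq {E : Type*} [NormedAddCommGroup E] [NormedSpace ℝ E]
    (g : ℝ → E) (s : ℝ) {ε : ℝ} (hε : 0 < ε) :
    ε ^ (s + 1) • ∫ x in Ioi (0 : ℝ), x ^ s • g x = ∫ t in Ioi (0 : ℝ), t ^ s • g (t / ε) := by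
  have hsubst := integral_comp_mul_left_Ioi' (fun t => t ^ s • g (t / ε)) 0 hε
  rw [mul_zero] at hsubst
  rw [← hsubst, Real.rpow_add_one hε.ne', mul_comm _ ε, mul_smul, ← integral_smul]
  congr 1
  refine setIntegral_congr_fun measurableSet_Ioi fun x (hx : 0 < x) => ?_
  simp only [Real.mul_rpow hε.le hx.le, mul_div_cancel_left₀ x hε.ne', mul_smul]

variable {ι : Type*} {l : Filter ι} [l.IsCountablyGenerated]

lemma tendsto_integral_rpow_mul_exp {φ : ι → ℝ → ℝ} {s μ : ℝ} (hs : -1 < s) (hμ : 0 < μ)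
    (hφ_cont : ∀ᶠ i in l, ContinuousOn (φ i) (Ioi 0))
    (hφ_le : ∀ᶠ i in l, ∀ t, 0 < t → φ i t ≤ -(μ * t))
    (hφ_lim : ∀ t, 0 < t → Tendsto (fun i => φ i t) l (𝓝 (-(μ * t)))) :
    Tendsto (fun i => ∫ t in Ioi (0 : ℝ), t ^ s * Real.exp (φ i t)) l
      (𝓝 ((1 / μ) ^ (s + 1) * Real.Gamma (s + 1))) := by
  have hs' : 0 < s + 1 := by linarith
  have hgamma : ∫ t in Ioi (0 : ℝ), t ^ s * Real.exp (-(μ * t)) =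
      (1 / μ) ^ (s + 1) * Real.Gamma (s + 1) := by
    simpa only [add_sub_cancel_right] using Real.integral_rpow_mul_exp_neg_mul_Ioi hs' hμ
  have hint : IntegrableOn (fun t => t ^ s * Real.exp (-(μ * t))) (Ioi 0) :=
    .of_integral_ne_zero (hgamma ▸ (by have := Real.Gamma_pos_of_pos hs'; positivity))
  rw [← hgamma]
  refine tendsto_integral_filter_of_dominated_convergence _ ?_ ?_ hint ?_
  · filter_upwards [hφ_cont] with i hcont
    have hpow : ContinuousOn (fun t : ℝ => t ^ s) (Ioi 0) :=
      continuousOn_id.rpow_const fun t ht => .inl (ne_of_gt ht)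
    exact (hpow.mul hcont.rexp).aestronglyMeasurable measurableSet_Ioi
  · filter_upwards [hφ_le] with i hle
    filter_upwards [ae_restrict_mem measurableSet_Ioi] with t (ht : 0 < t)
    rw [Real.norm_of_nonneg (by positivity)]
    gcongr
    exact hle t ht
  · filter_upwards [ae_restrict_mem measurableSet_Ioi] with t ht
    exact ((hφ_lim t ht).rexp).const_mul _

end LaplaceIntegrals

section VirtualWait

/-- Logarithm `lam ∫₀ˣ (1 - G) - μ x` of the unnormalized stationary density of the virtual waiting
time in the `M/M/1+GI` queue with arrival rate `lam`, service rate `μ` and patience CDF `G`. -/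
noncomputable def waitLogDensity (G : ℝ → ℝ) (lam μ x : ℝ) : ℝ :=
  lam * (∫ u in (0 : ℝ)..x, (1 - G u)) - μ * x

/-- Moment of real order `s` of the unnormalized virtual waiting time density; the orders `0` and
`1` are `J` and `J₁`. -/
noncomputable def waitMoment (G : ℝ → ℝ) (lam μ s : ℝ) : ℝ :=
  ∫ x in Ioi (0 : ℝ), x ^ s * Real.exp (waitLogDensity G lam μ x)

/-- Mean stationary virtual waiting time; the summand `1` in the denominator is the weight of the
atom at `0` in the normalization where the density is `lam * exp (waitLogDensity G lam μ x)`. -/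
noncomputable def meanWait (G : ℝ → ℝ) (lam μ : ℝ) : ℝ :=
  lam * waitMoment G lam μ 1 / (1 + lam * waitMoment G lam μ 0)

lemma Emean_eq_meanWait (F : ℝ → ℝ) (μ c γ α : ℝ) :
    Emean F μ c γ α = meanWait (fun x => F (α * x)) ((1 + c * α ^ γ) * μ) μ := by
  simp only [Emean, Jq, J1q, meanWait, waitMoment, waitLogDensity, Real.rpow_one, Real.rpow_zero,
    one_mul]

lemma waitLogDensity_eq {G : ℝ → ℝ} {x : ℝ} (hG : IntervalIntegrable G volume 0 x) (lam μ : ℝ) :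
    waitLogDensity G lam μ x = -((μ - lam) * x) - lam * ∫ u in (0 : ℝ)..x, G u := by
  rw [waitLogDensity, intervalIntegral.integral_sub intervalIntegrable_const hG,
    intervalIntegral.integral_const, smul_eq_mul]
  ring

lemma continuous_waitLogDensity {G : ℝ → ℝ} (hG : ∀ a b, IntervalIntegrable G volume a b)
    (lam μ : ℝ) : Continuous (waitLogDensity G lam μ) :=
  ((intervalIntegral.continuous_primitive (fun a b => intervalIntegrable_const.sub (hG a b))
    0).const_mul lam).sub (continuous_const_mul μ)

variable {ι : Type*} {l : Filter ι} [l.IsCountablyGenerated] {G : ι → ℝ → ℝ} {ε : ι → ℝ} {μ : ℝ}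

theorem tendsto_rpow_mul_waitMoment {s : ℝ} (hs : -1 < s) (hμ : 0 < μ)
    (hε : Tendsto ε l (𝓝[>] 0))
    (hG_int : ∀ᶠ i in l, ∀ a b, IntervalIntegrable (G i) volume a b)
    (hG_nonneg : ∀ᶠ i in l, ∀ x, 0 ≤ x → 0 ≤ G i x)
    (hG_lim : ∀ t, 0 < t → Tendsto (fun i => ∫ u in (0 : ℝ)..t / ε i, G i u) l (𝓝 0)) :
    Tendsto (fun i => ε i ^ (s + 1) * waitMoment (G i) ((1 - ε i) * μ) μ s) l
      (𝓝 ((1 / μ) ^ (s + 1) * Real.Gamma (s + 1))) := by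
  obtain ⟨hε_zero, hε_pos⟩ := tendsto_nhdsWithin_iff.mp hε
  have hrescaled : ∀ᶠ i in l, ∀ t, waitLogDensity (G i) ((1 - ε i) * μ) μ (t / ε i) =
      -(μ * t) - (1 - ε i) * μ * ∫ u in (0 : ℝ)..t / ε i, G i u := by
    filter_upwards [hε_pos, hG_int] with i (hpos : 0 < ε i) hint t
    rw [waitLogDensity_eq (hint _ _)]
    field_simp
    ring
  refine (tendsto_integral_rpow_mul_exp (φ := fun i t =>
    waitLogDensity (G i) ((1 - ε i) * μ) μ (t / ε i)) hs hμ ?_ ?_ fun t ht => ?_).congr' ?_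
  · filter_upwards [hG_int] with i hint
    exact ((continuous_waitLogDensity hint _ μ).comp (continuous_id.div_const _)).continuousOn
  · filter_upwards [hrescaled, hε_pos, hε_zero.eventually_le_const one_pos, hG_nonneg]
      with i heq (hpos : 0 < ε i) hle_one hnonneg t ht
    rw [heq]
    have hloss : 0 ≤ ∫ u in (0 : ℝ)..t / ε i, G i u :=
      intervalIntegral.integral_nonneg (by positivity) fun u hu => hnonneg u hu.1
    exact sub_le_self _ (mul_nonneg (mul_nonneg (sub_nonneg.mpr hle_one) hμ.le) hloss)
  · have h := (((hε_zero.const_sub 1).mul_const μ).mul (hG_lim t ht)).const_sub (-(μ * t))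
    rw [mul_zero, sub_zero] at h
    exact h.congr' (hrescaled.mono fun i heq => (heq t).symm)
  · filter_upwards [hε_pos] with i hpos
    exact (rpow_smul_integral_rpow_smul_eq
      (fun x => Real.exp (waitLogDensity (G i) ((1 - ε i) * μ) μ x)) s hpos).symm

theorem tendsto_mul_meanWait (hμ : 0 < μ) (hε : Tendsto ε l (𝓝[>] 0))
    (hG_int : ∀ᶠ i in l, ∀ a b, IntervalIntegrable (G i) volume a b)
    (hG_nonneg : ∀ᶠ i in l, ∀ x, 0 ≤ x → 0 ≤ G i x)
    (hG_lim : ∀ t, 0 < t → Tendsto (fun i => ∫ u in (0 : ℝ)..t / ε i, G i u) l (𝓝 0)) :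
    Tendsto (fun i => μ * ε i * meanWait (G i) ((1 - ε i) * μ) μ) l (𝓝 1) := by
  obtain ⟨hε_zero, hε_pos⟩ := tendsto_nhdsWithin_iff.mp hε
  have hmass : Tendsto (fun i => ε i * waitMoment (G i) ((1 - ε i) * μ) μ 0) l (𝓝 (1 / μ)) := by
    simpa using tendsto_rpow_mul_waitMoment neg_one_lt_zero hμ hε hG_int hG_nonneg hG_lim
  have hfirst : Tendsto (fun i => ε i ^ 2 * waitMoment (G i) ((1 - ε i) * μ) μ 1) l
      (𝓝 ((1 / μ) ^ 2)) := by
    simpa [one_add_one_eq_two] using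
      tendsto_rpow_mul_waitMoment (s := 1) (by norm_num) hμ hε hG_int hG_nonneg hG_lim
  have hlam : Tendsto (fun i => (1 - ε i) * μ) l (𝓝 μ) := by
    simpa using (hε_zero.const_sub 1).mul_const μ
  have hnum := (hlam.mul hfirst).const_mul μ
  have hden := hε_zero.add (hlam.mul hmass)
  have hden_one : 0 + μ * (1 / μ) = 1 := by rw [zero_add, mul_one_div_cancel hμ.ne']
  have hnum_one : μ * (μ * (1 / μ) ^ 2) = 1 := by field_simp
  rw [hden_one] at hden
  have hquot := hnum.div hden one_ne_zero
  rw [hnum_one, div_one] at hquot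
  refine hquot.congr' ?_
  filter_upwards [hε_pos] with i (hpos : 0 < ε i)
  simp only [Pi.div_apply, meanWait]
  rw [mul_div_assoc', ← mul_div_mul_left _ (1 + _) hpos.ne']
  ring

end VirtualWait

theorem mm1gi_heavy_traffic_underloaded_general {F : ℝ → ℝ} {κ μ γ c : ℝ}
    (hF_int : ∀ a b, IntervalIntegrable F volume a b) (hF_nonneg : ∀ x, 0 ≤ x → 0 ≤ F x)
    (hκ : 0 < κ) (hF_bigO : F =O[𝓝[>] 0] fun x => x ^ κ)
    (hμ : 0 < μ) (hγ : 0 < γ) (hc : c < 0) (hγκ : γ < κ / (κ + 1)) :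
    Tendsto (fun α : ℝ => (-c) * μ * α ^ γ * Emean F μ c γ α) (𝓝[>] (0 : ℝ)) (𝓝 1) ∧
    Tendsto (fun α : ℝ => Emean F μ c γ α / ((1 + c * α ^ γ) / (μ * (1 - (1 + c * α ^ γ)))))
      (𝓝[>] (0 : ℝ)) (𝓝 1) := by
  have hε : Tendsto (fun α : ℝ => -c * α ^ γ) (𝓝[>] 0) (𝓝[>] 0) := by
    simpa only [mul_zero] using
      TendstoNhdsWithinIoi.const_mul (neg_pos.mpr hc) (tendsto_rpow_nhdsGT_zero hγ)
  have hρ : Tendsto (fun α : ℝ => 1 + c * α ^ γ) (𝓝[>] 0) (𝓝 1) := by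
    simpa using (tendsto_nhds_of_tendsto_nhdsWithin hε).const_sub 1
  have hG_int : ∀ᶠ α in 𝓝[>] (0 : ℝ), ∀ a b,
      IntervalIntegrable (fun x => F (α * x)) volume a b := by
    filter_upwards [self_mem_nhdsWithin] with α (hα : 0 < α) a b
    simpa only [mul_div_cancel_left₀ _ hα.ne'] using
      (hF_int (α * a) (α * b)).comp_mul_left (c := α)
  have hG_nonneg : ∀ᶠ α in 𝓝[>] (0 : ℝ), ∀ x, 0 ≤ x → 0 ≤ F (α * x) := by
    filter_upwards [self_mem_nhdsWithin] with α (hα : 0 < α) x hx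
    exact hF_nonneg _ (by positivity)
  have hG_lim : ∀ t, 0 < t →
      Tendsto (fun α : ℝ => ∫ u in (0 : ℝ)..t / (-c * α ^ γ), F (α * u)) (𝓝[>] 0) (𝓝 0) :=
    fun t ht => by
      simpa only [div_div] using
        tendsto_integral_comp_mul_of_isBigO_rpow (neg_one_lt_zero.trans hκ) hF_bigO hγκ
          (div_pos ht (neg_pos.mpr hc))
  have hscaled : Tendsto (fun α : ℝ => (-c) * μ * α ^ γ * Emean F μ c γ α) (𝓝[>] 0) (𝓝 1) := by
    refine (tendsto_mul_meanWait hμ hε hG_int hG_nonneg hG_lim).congr fun α => ?_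
    rw [Emean_eq_meanWait, neg_mul, sub_neg_eq_add]
    ring
  refine ⟨hscaled, ?_⟩
  have hratio := hscaled.div hρ one_ne_zero
  rw [div_one] at hratio
  refine hratio.congr fun α => ?_
  rw [Pi.div_apply, div_div_eq_mul_div]
  ring

/-- underloaded heavy-traffic limit for the exact `M/M/1+GI` mean
virtual waiting time: if `c < 0` and `0 < γ < h = k/(k+1)` then
`(-c) μ α^γ E(α) → 1`, equivalently `E(α) / [ρ(α)/(μ(1-ρ(α)))] → 1`. -/
theorem mm1gi_heavy_traffic_underloaded
    (k : ℕ) (hk : 1 ≤ k)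
    (F : ℝ → ℝ)
    (hF_mono : Monotone F)
    (hF_zero : ∀ x ≤ (0 : ℝ), F x = 0)
    (hF_range : ∀ x, 0 ≤ x → 0 ≤ F x ∧ F x < 1)
    (hF_lim : Tendsto F atTop (𝓝 1))
    (hF_smooth : ContDiffOn ℝ k F (Set.Ici 0))
    (hF_derivs : ∀ j < k, iteratedDerivWithin j F (Set.Ici 0) 0 = 0)
    (hF_k : 0 < iteratedDerivWithin k F (Set.Ici 0) 0)
    (μ γ c : ℝ) (hμ : 0 < μ) (hγ : 0 < γ)
    (hc : c < 0) (hγh : γ < (k : ℝ) / (k + 1))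
    (hJ : ∀ᶠ α in 𝓝[>] (0 : ℝ), IntegrableOn
      (fun x : ℝ => Real.exp ((1 + c * α ^ γ) * μ *
        (∫ u in (0 : ℝ)..x, (1 - F (α * u))) - μ * x)) (Set.Ioi 0))
    (hJ1 : ∀ᶠ α in 𝓝[>] (0 : ℝ), IntegrableOn
      (fun x : ℝ => x * Real.exp ((1 + c * α ^ γ) * μ *
        (∫ u in (0 : ℝ)..x, (1 - F (α * u))) - μ * x)) (Set.Ioi 0)) :
    Tendsto (fun α : ℝ => (-c) * μ * α ^ γ * Emean F μ c γ α)
      (𝓝[>] (0 : ℝ)) (𝓝 1) ∧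
    Tendsto (fun α : ℝ =>
        Emean F μ c γ α / ((1 + c * α ^ γ) / (μ * (1 - (1 + c * α ^ γ)))))
      (𝓝[>] (0 : ℝ)) (𝓝 1) := by
  have hk_pos : (0 : ℝ) < k := by exact_mod_cast hk
  have hF_bigO : F =O[𝓝[>] 0] fun x => x ^ (k : ℝ) := by
    simpa only [sub_zero, Real.rpow_natCast] using
      (isBigO_pow_of_iteratedDerivWithin_eq_zero (convex_Ici 0) self_mem_Ici hF_smooth
        hF_derivs).mono (nhdsWithin_mono 0 Ioi_subset_Ici_self)
  exact mm1gi_heavy_traffic_underloaded_general (fun _ _ => hF_mono.intervalIntegrable)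
    (fun x hx => (hF_range x hx).1) hk_pos hF_bigO hμ hγ hc hγh
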